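/- arXiv:1501.06452 — 9 statements merged into one kernel-verified Lean document; each statement's English description precedes it below -/
import Mathlib

section
/- Let X be a sequential topological space, let (U_n)_{n∈ℕ} be a sequence of open subsets of X and let U_∞ be an open subset of X. Then (U_n) converges to U_∞ with respect to the compact-open topology on O(X) if and only if for every k ∈ ℕ the set W_k := U_∞ ∩ ⋂_{n≥k} U_n is open in X and U_∞ = ⋃_{k∈ℕ} W_k. -/
/-!
Convergence `U n → Uinf` in the compact-open topology means that every compact `K ⊆ Uinf` is
eventually contained in `U n` (`tendsto_coTopology_iff`).

Write `W k` for `Uinf ∩ ⋂ n ≥ k, U n`. If `U n → Uinf`, singletons give `Uinf = ⋃ k, W k`.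
For the openness of `W k` it suffices, `X` being
sequential, that a sequence `x` converging to a point `a ∈ W k` is eventually in `W k`. A tail of
`x` lies in `Uinf` and forms together with `a` a compact set, hence lies in all `U n` with `n ≥ M`
for some `M`; the finitely many remaining `U n` with `k ≤ n < M` are open neighbourhoods of `a`.

Conversely, if the `W k` are open with union `Uinf`, they form an increasing open cover of it,
so a compact `K ⊆ Uinf` lies in
a single `W k`, hence in `U n` for all `n ≥ k`.
-/

open TopologicalSpace Filter Set

/-- A subset `H` of a complete lattice is **ω-Scott open** if it is upward closed and every
nonempty countable directed family `D` whose supremum belongs to `H` meets `H`. -/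
def OmegaScottOpen {L : Type*} [CompleteLattice L] (H : Set L) : Prop :=
  (∀ ⦃U V : L⦄, U ∈ H → U ≤ V → V ∈ H) ∧
  ∀ D : Set L, D.Nonempty → D.Countable → DirectedOn (· ≤ ·) D → sSup D ∈ H →
    (D ∩ H).Nonempty

/-- A subset `H` of a complete lattice is **Scott open** if it is upward closed and every
nonempty directed family `D` whose supremum belongs to `H` meets `H`. -/
def ScottOpen {L : Type*} [CompleteLattice L] (H : Set L) : Prop :=
  (∀ ⦃U V : L⦄, U ∈ H → U ≤ V → V ∈ H) ∧
  ∀ D : Set L, D.Nonempty → DirectedOn (· ≤ ·) D → sSup D ∈ H → (D ∩ H).Nonempty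

/-- The ω-Scott topology on a complete lattice: the collection of ω-Scott open sets (these form a
topology, so it coincides with the topology they generate). -/
def omegaScottTopology (L : Type*) [CompleteLattice L] : TopologicalSpace L :=
  .generateFrom {H | OmegaScottOpen H}

/-- The Scott topology on a complete lattice. -/
def scottTopology' (L : Type*) [CompleteLattice L] : TopologicalSpace L :=
  .generateFrom {H | ScottOpen H}

/-- A set `K` is countably compact if every countable open cover of `K` has a finite subcover. -/
def CountablyCompactSet {X : Type*} [TopologicalSpace X] (K : Set X) : Prop :=
  ∀ C : Set (Set X), C.Countable → (∀ c ∈ C, IsOpen c) → K ⊆ ⋃₀ C →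
    ∃ F ⊆ C, F.Finite ∧ K ⊆ ⋃₀ F

/-- The compact-open topology on the lattice of opens of `X`, generated by the sets
`K^⊆ = {U | K ⊆ U}` for `K` compact. -/
def coTopology (X : Type*) [TopologicalSpace X] : TopologicalSpace (Opens X) :=
  .generateFrom {H | ∃ K : Set X, IsCompact K ∧ H = {U : Opens X | K ⊆ (U : Set X)}}

/-- The countably-compact-open topology on the lattice of opens of `X`. -/
def ccoTopology (X : Type*) [TopologicalSpace X] : TopologicalSpace (Opens X) :=
  .generateFrom
    {H | ∃ K : Set X, CountablyCompactSet K ∧ H = {U : Opens X | K ⊆ (U : Set X)}}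

/-- A topological space is sequentially Hausdorff if limits of sequences are unique. -/
def SeqHausdorff (X : Type*) [TopologicalSpace X] : Prop :=
  ∀ (x : ℕ → X) (a b : X), Tendsto x atTop (nhds a) → Tendsto x atTop (nhds b) → a = b

/-- `OO X` is the lattice of ω-Scott open subsets of `O(X)`, i.e. the opens of `O(X)`. -/
def OO (X : Type*) [TopologicalSpace X] : Type _ := {H : Set (Opens X) // OmegaScottOpen H}

namespace OO

variable {X : Type*} [TopologicalSpace X]

lemma omegaScottOpen_sUnion {S : Set (Set (Opens X))} (hS : ∀ s ∈ S, OmegaScottOpen s) :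
    OmegaScottOpen (⋃₀ S) := by
  constructor
  · rintro U V ⟨s, hs, hU⟩ hUV
    exact ⟨s, hs, (hS s hs).1 hU hUV⟩
  · rintro D hne hcnt hdir hsup
    obtain ⟨s, hs, hU⟩ := hsup
    obtain ⟨d, hdD, hds⟩ := (hS s hs).2 D hne hcnt hdir hU
    exact ⟨d, hdD, s, hs, hds⟩

instance : PartialOrder (OO X) := Subtype.partialOrder _

instance : SupSet (OO X) :=
  ⟨fun s => ⟨⋃₀ (Subtype.val '' s),
    omegaScottOpen_sUnion (by rintro _ ⟨a, _, rfl⟩; exact a.2)⟩⟩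

/-- `OO X`, ordered by inclusion, is a complete lattice (suprema are unions). -/
noncomputable instance : CompleteLattice (OO X) :=
  completeLatticeOfSup _ fun s => by
    constructor
    · intro a ha U hU
      exact ⟨a.1, ⟨a, ha, rfl⟩, hU⟩
    · intro b hb U hU
      obtain ⟨_, ⟨a, ha, rfl⟩, hUa⟩ := hU
      exact hb ha hUa

end OO

/-- `e K` is the collection of open sets containing `K`. -/
def eOpens {X : Type*} [TopologicalSpace X] (K : Set X) : Set (Opens X) :=
  {U : Opens X | K ⊆ (U : Set X)}

lemma exists_upper_of_directedOn {L : Type*} [Preorder L] {D : Set L}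
    (hne : D.Nonempty) (hdir : DirectedOn (· ≤ ·) D) (s : Finset L) (hs : ↑s ⊆ D) :
    ∃ d ∈ D, ∀ U ∈ s, U ≤ d := by
  classical
  induction s using Finset.induction_on with
  | empty => exact ⟨hne.choose, hne.choose_spec, by simp⟩
  | @insert a t ha ih =>
      obtain ⟨d, hd, hdt⟩ := ih (fun x hx => hs (by simp [hx]))
      obtain ⟨e, he, hae, hde⟩ := hdir a (hs (by simp)) d hd
      refine ⟨e, he, ?_⟩
      intro U hU
      rcases Finset.mem_insert.1 hU with rfl | hU
      · exact hae
      · exact (hdt U hU).trans hde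

/-- For a countably compact set `K`, the collection `e K` is ω-Scott open. -/
lemma omegaScottOpen_eOpens {X : Type*} [TopologicalSpace X] {K : Set X}
    (hK : CountablyCompactSet K) : OmegaScottOpen (eOpens K) := by
  classical
  constructor
  · intro U V hU hUV x hx
    exact hUV (hU hx)
  · rintro D hne hcnt hdir hsup
    have hcover : K ⊆ ⋃₀ ((fun U : Opens X => (U : Set X)) '' D) := by
      intro x hx
      have hx' : x ∈ sSup D := hsup hx
      obtain ⟨U, hU, hxU⟩ := Opens.mem_sSup.1 hx'
      exact ⟨(U : Set X), mem_image_of_mem _ hU, hxU⟩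
    obtain ⟨F, hFsub, hFfin, hKF⟩ := hK _ (hcnt.image _)
      (by rintro _ ⟨U, _, rfl⟩; exact U.2) hcover
    obtain ⟨F₀, hF₀D, hF₀⟩ := Set.subset_image_iff.mp hFsub
    have hF₀fin : F₀.Finite :=
      Set.Finite.of_finite_image (hF₀.symm ▸ hFfin) SetLike.coe_injective.injOn
    obtain ⟨d, hd, hdub⟩ := exists_upper_of_directedOn hne hdir hF₀fin.toFinset
      (by simpa using hF₀D)
    refine ⟨d, hd, ?_⟩
    intro x hx
    obtain ⟨c, hcF, hxc⟩ := hKF hx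
    rw [← hF₀] at hcF
    obtain ⟨U, hU, rfl⟩ := hcF
    exact hdub U (hF₀fin.mem_toFinset.2 hU) hxc

lemma tendsto_coTopology_iff {X : Type*} [TopologicalSpace X] (U : ℕ → Opens X)
    (Uinf : Opens X) :
    Tendsto U atTop (@nhds (Opens X) (coTopology X) Uinf) ↔
      ∀ K : Set X, IsCompact K → K ⊆ (Uinf : Set X) →
        ∃ M, ∀ n ≥ M, K ⊆ (U n : Set X) := by
  unfold coTopology
  rw [tendsto_nhds_generateFrom_iff]
  constructor
  · intro h K hK hKU
    exact eventually_atTop.1 (h _ ⟨K, hK, rfl⟩ hKU)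
  · rintro h _ ⟨K, hK, rfl⟩ hKU
    exact eventually_atTop.2 (h K hK hKU)

/-- In a sequential space `X`, a sequence `(Uₙ)` of opens converges to `U∞`
w.r.t. the compact-open topology on `O(X)` iff every `W_k := U∞ ∩ ⋂_{n ≥ k} Uₙ` is open and
`U∞ = ⋃_k W_k`. -/
theorem statement0 {X : Type*} [TopologicalSpace X] [SequentialSpace X]
    (U : ℕ → Opens X) (Uinf : Opens X) :
    Tendsto U atTop (@nhds (Opens X) (coTopology X) Uinf) ↔
      ((∀ k : ℕ, IsOpen ((Uinf : Set X) ∩ ⋂ n ∈ Ici k, (U n : Set X))) ∧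
        (Uinf : Set X) = ⋃ k : ℕ, ((Uinf : Set X) ∩ ⋂ n ∈ Ici k, (U n : Set X))) := by
  rw [tendsto_coTopology_iff]
  constructor
  · intro h
    refine ⟨fun k => ?_, ?_⟩
    · rw [← isClosed_compl_iff, ← isSeqClosed_iff_isClosed]
      rintro x a hx hxa ⟨haU, haI⟩
      rw [mem_iInter₂] at haI
      obtain ⟨N, hN⟩ := eventually_atTop.1 (hxa.eventually (Uinf.isOpen.mem_nhds haU))
      have hshift : Tendsto (fun m => x (m + N)) atTop (nhds a) :=
        hxa.comp (tendsto_add_atTop_nat N)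
      obtain ⟨M, hM⟩ := h _ hshift.isCompact_insert_range
        (insert_subset haU (range_subset_iff.2 fun m => hN _ (by omega)))
      have hfin : ∀ᶠ m in atTop, ∀ n ∈ Ico k M, x m ∈ U n :=
        (eventually_all_finite (finite_Ico k M)).2 fun n hn =>
          hxa.eventually ((U n).isOpen.mem_nhds (haI n hn.1))
      obtain ⟨m, hm, hmN⟩ := (hfin.and (eventually_ge_atTop N)).exists
      refine hx m ⟨hN m hmN, mem_iInter₂.2 fun n hn => ?_⟩
      rcases lt_or_ge n M with hnM | hnM
      · exact hm n ⟨hn, hnM⟩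
      · exact hM n hnM (Or.inr ⟨m - N, by simp [Nat.sub_add_cancel hmN]⟩)
    · refine Subset.antisymm (fun x hx => ?_) (iUnion_subset fun k => inter_subset_left)
      obtain ⟨M, hM⟩ := h {x} isCompact_singleton (singleton_subset_iff.2 hx)
      exact mem_iUnion.2 ⟨M, hx, mem_iInter₂.2 fun n hn => hM n hn rfl⟩
  · rintro ⟨hopen, hunion⟩ K hK hKU
    have hmono : Monotone fun k : ℕ => (Uinf : Set X) ∩ ⋂ n ∈ Ici k, (U n : Set X) :=
      fun i j hij => inter_subset_inter_right _ (biInter_subset_biInter_left (Ici_subset_Ici.2 hij))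
    obtain ⟨k, hk⟩ := hK.elim_directed_cover _ hopen (hKU.trans hunion.subset) hmono.directed_le
    exact ⟨k, fun n hn y hy => mem_iInter₂.1 (hk hy).2 n hn⟩
end

section
/- Let X be a sequential topological space, let (U_n)_{n∈ℕ} be a sequence of open subsets of X and let U_∞ be an open subset of X. Then (U_n) converges to U_∞ with respect to the compact-open topology on O(X) if and only if for every sequence (x_n) in X converging to some point x_∞ ∈ U_∞ there exists n₀ ∈ ℕ such that x_n ∈ U_n for all n ≥ n₀. -/
/-!
The forward direction holds because a tail of a convergent sequence together with its limit is
compact. Conversely, the condition on sequences makes the increasing sets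
`W m = U∞ ∩ ⋂ n ≥ m, U n` sequentially open (`isOpen_tailInter`), hence open as `X` is sequential;
applied to constant sequences it shows that they cover `U∞`. A compact `K ⊆ U∞` is therefore
contained in some `W m`, that is, in all `U n` with `n ≥ m`.
-/

open TopologicalSpace Filter Set

/-- The points of `Uinf` that lie in `U n` for every `n ≥ m`. -/
def tailInter {X : Type*} [TopologicalSpace X] (U : ℕ → Opens X) (Uinf : Opens X) (m : ℕ) :
    Set X :=
  {x | x ∈ Uinf ∧ ∀ n ≥ m, x ∈ U n}

/-- If `y k ∉ U n` held for arbitrarily large `k` and `n`, then placing such points `y k` at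
positions `n`, with `k` and `n` both tending to infinity, and the limit `a` at all other
positions would give a sequence violating `h`. -/
lemma exists_forall_mem_of_tendsto {X : Type*} [TopologicalSpace X]
    {U : ℕ → Opens X} {Uinf : Opens X}
    (h : ∀ (x : ℕ → X) (xinf : X), Tendsto x atTop (nhds xinf) → xinf ∈ Uinf →
      ∃ n₀ : ℕ, ∀ n ≥ n₀, x n ∈ U n)
    {y : ℕ → X} {a : X} (hy : Tendsto y atTop (nhds a)) (ha : a ∈ Uinf) :
    ∃ N, ∀ k ≥ N, ∀ n ≥ N, y k ∈ U n := by
  by_contra! hN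
  obtain ⟨φ, hφ, hP⟩ := extraction_forall_of_frequently
    (P := fun j n => ∃ k ≥ j, y k ∉ U n) (fun j => by
      rw [frequently_atTop]
      intro b
      obtain ⟨k, hk, n, hn, hkn⟩ := hN (max j b)
      exact ⟨n, (le_max_right _ _).trans hn, k, (le_max_left _ _).trans hk, hkn⟩)
  choose κ hκ hκU using hP
  have hx : Tendsto (Function.extend φ (y ∘ κ) fun _ => a) atTop (nhds a) := by
    intro S hS
    obtain ⟨K, hK⟩ := mem_atTop_sets.1 (hy hS)
    refine mem_atTop_sets.2 ⟨φ K, fun n hn => ?_⟩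
    by_cases hj : ∃ j, φ j = n
    · obtain ⟨j, rfl⟩ := hj
      rw [mem_preimage, hφ.injective.extend_apply]
      exact hK _ ((hφ.le_iff_le.1 hn).trans (hκ j))
    · rw [mem_preimage, Function.extend_apply' _ _ _ hj]
      exact mem_of_mem_nhds hS
  obtain ⟨n₀, hn₀⟩ := h _ a hx ha
  apply hκU n₀
  simpa [hφ.injective.extend_apply] using hn₀ (φ n₀) (hφ.id_le n₀)

lemma isOpen_tailInter {X : Type*} [TopologicalSpace X] [SequentialSpace X]
    {U : ℕ → Opens X} {Uinf : Opens X}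
    (h : ∀ (x : ℕ → X) (xinf : X), Tendsto x atTop (nhds xinf) → xinf ∈ Uinf →
      ∃ n₀ : ℕ, ∀ n ≥ n₀, x n ∈ U n) (m : ℕ) :
    IsOpen (tailInter U Uinf m) := by
  rw [← isClosed_compl_iff, ← isSeqClosed_iff_isClosed]
  intro y a hyW hy ha
  obtain ⟨N, hN⟩ := exists_forall_mem_of_tendsto h hy ha.1
  -- The finitely many conditions with `m ≤ n < N` are handled by openness of each `U n`.
  have hfin : ∀ᶠ k in atTop, ∀ n ∈ Finset.Ico m N, y k ∈ U n :=
    (Filter.eventually_all_finset _).2 fun n hn =>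
      hy.eventually_mem ((U n).isOpen.mem_nhds (ha.2 n (Finset.mem_Ico.1 hn).1))
  obtain ⟨k, hk, hkinf, hkN⟩ := (hfin.and
    ((hy.eventually_mem (Uinf.isOpen.mem_nhds ha.1)).and (eventually_ge_atTop N))).exists
  refine hyW k ⟨hkinf, fun n hn => ?_⟩
  rcases lt_or_ge n N with hnN | hnN
  · exact hk n (Finset.mem_Ico.2 ⟨hn, hnN⟩)
  · exact hN k hkN n hnN

/-- In a sequential space `X`, a sequence `(Uₙ)` of opens converges to `U∞`
w.r.t. the compact-open topology on `O(X)` iff for every sequence `(xₙ)` converging to a point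
of `U∞` there is `n₀` with `xₙ ∈ Uₙ` for all `n ≥ n₀`. -/
theorem statement1 {X : Type*} [TopologicalSpace X] [SequentialSpace X]
    (U : ℕ → Opens X) (Uinf : Opens X) :
    Tendsto U atTop (@nhds (Opens X) (coTopology X) Uinf) ↔
      (∀ (x : ℕ → X) (xinf : X), Tendsto x atTop (nhds xinf) → xinf ∈ Uinf →
        ∃ n₀ : ℕ, ∀ n ≥ n₀, x n ∈ U n) := by
  constructor
  · intro hU x a hx ha
    obtain ⟨m, hm⟩ := eventually_atTop.1 (hx.eventually_mem (Uinf.isOpen.mem_nhds ha))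
    have hK : IsCompact (insert a (range fun n => x (n + m))) :=
      ((tendsto_add_atTop_iff_nat m).2 hx).isCompact_insert_range
    have hmem : Uinf ∈ {V : Opens X | insert a (range fun n => x (n + m)) ⊆ (V : Set X)} := by
      refine insert_subset ha ?_
      rintro _ ⟨n, rfl⟩
      exact hm _ (Nat.le_add_left m n)
    obtain ⟨N, hN⟩ := eventually_atTop.1
      (tendsto_nhds_generateFrom_iff.1 hU _ ⟨_, hK, rfl⟩ hmem)
    refine ⟨max m N, fun n hn => hN n ((le_max_right _ _).trans hn) (Or.inr ⟨n - m, ?_⟩)⟩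
    simp [Nat.sub_add_cancel ((le_max_left _ _).trans hn)]
  · intro h
    refine tendsto_nhds_generateFrom_iff.2 ?_
    rintro _ ⟨K, hK, rfl⟩ hKU
    have hmono : Monotone (tailInter U Uinf) := fun i j hij x hx =>
      ⟨hx.1, fun n hn => hx.2 n (hij.trans hn)⟩
    obtain ⟨m, hm⟩ := hK.elim_directed_cover (tailInter U Uinf) (isOpen_tailInter h)
      (fun x hx => by
        obtain ⟨n₀, hn₀⟩ := h (fun _ => x) x tendsto_const_nhds (hKU hx)
        exact mem_iUnion.2 ⟨n₀, hKU hx, hn₀⟩)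
      hmono.directed_le
    exact mem_atTop_sets.2 ⟨m, fun n hn x hx => (hm hx).2 n hn⟩
end

section
/- Let X be a sequential topological space, let (U_n)_{n∈ℕ} be a sequence of open subsets of X and let U_∞ be an open subset of X. Then the following are equivalent: (i) (U_n) converges to U_∞ with respect to the Scott topology on O(X); (ii) (U_n) converges to U_∞ with respect to the ω-Scott topology on O(X); (iii) (U_n) converges to U_∞ with respect to the compact-open topology on O(X); (iv) (U_n) converges to U_∞ with respect to the countably-compact-open topology on O(X). -/
/-!
The Scott topology is coarser than the ω-Scott topology, and the compact-open topology is coarser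
than both the Scott and the countably-compact-open topologies, the latter being coarser than the
ω-Scott topology. Hence everything reduces to showing that compact-open convergence implies
ω-Scott convergence.

Suppose `U n → Uinf` in the compact-open topology, and put `V m = Uinf ∩ ⋂ n ≥ m, U n`. If a
sequence `x` converges to a point of `V m`, then a tail of `x` together with its limit is a compact
subset of `Uinf`, hence contained in `U n` for all large `n`; the finitely many remaining `U n`
with `n ≥ m` are open and contain a tail of `x`. So `V m` is sequentially open, thus open
(`isOpen_inter_tail`). The `V m` increase to `Uinf` because singletons are compact, so an ω-Scott
open set containing `Uinf` contains some `V m`, and therefore all `U n` with `n ≥ m`.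
-/

open TopologicalSpace Filter Set

lemma ScottOpen.omegaScottOpen {L : Type*} [CompleteLattice L] {H : Set L} (hH : ScottOpen H) :
    OmegaScottOpen H :=
  ⟨hH.1, fun D hne _ hdir hsup => hH.2 D hne hdir hsup⟩

lemma countablyCompactSet_of_isCompact {X : Type*} [TopologicalSpace X] {K : Set X}
    (hK : IsCompact K) : CountablyCompactSet K := by
  intro C _ hC hKC
  obtain ⟨F, hF, hfin, hKF⟩ := hK.elim_finite_subcover_image (b := C) (c := id) hC
    (by rwa [sUnion_eq_biUnion] at hKC)
  exact ⟨F, hF, hfin, by rwa [sUnion_eq_biUnion]⟩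

lemma scottOpen_eOpens {X : Type*} [TopologicalSpace X] {K : Set X} (hK : IsCompact K) :
    ScottOpen (eOpens K) := by
  refine ⟨fun U V hU hUV x hx => hUV (hU hx), fun D hne hdir hsup => ?_⟩
  have : Nonempty D := hne.to_subtype
  obtain ⟨d, hd⟩ := hK.elim_directed_cover (fun d : D => ((d : Opens X) : Set X))
    (fun d => d.1.isOpen)
    (fun x hx => by
      obtain ⟨W, hW, hxW⟩ := Opens.mem_sSup.1 (hsup hx)
      exact mem_iUnion.2 ⟨⟨W, hW⟩, hxW⟩)
    (directedOn_iff_directed.1 hdir)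
  exact ⟨d, d.2, hd⟩

/-- The key step: under compact-open convergence, the tail intersections inside the limit are
sequentially open. -/
lemma isOpen_inter_tail {X : Type*} [TopologicalSpace X] [SequentialSpace X]
    {U : ℕ → Opens X} {Uinf : Opens X}
    (h : ∀ K : Set X, IsCompact K → K ⊆ Uinf → ∀ᶠ n in atTop, K ⊆ U n) (m : ℕ) :
    IsOpen ((Uinf : Set X) ∩ ⋂ n ≥ m, (U n : Set X)) := by
  rw [← isClosed_compl_iff]
  apply IsSeqClosed.isClosed
  intro x a hx hxa ha
  have htail : ∀ᶠ k in atTop, x k ∈ Uinf := hxa.eventually (Uinf.isOpen.mem_nhds ha.1)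
  obtain ⟨k₀, hk₀⟩ := eventually_atTop.1 htail
  have hK := ((tendsto_add_atTop_iff_nat k₀).2 hxa).isCompact_insert_range
  have hKU : insert a (range fun k => x (k + k₀)) ⊆ (Uinf : Set X) := by
    rintro _ (rfl | ⟨k, rfl⟩)
    · exact ha.1
    · exact hk₀ _ (Nat.le_add_left _ _)
  obtain ⟨N, hN⟩ := eventually_atTop.1 (h _ hK hKU)
  have hsmall : ∀ᶠ k in atTop, ∀ n ∈ Finset.Ico m N, x k ∈ U n := by
    rw [Finset.eventually_all]
    intro n hn
    exact hxa.eventually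
      ((U n).isOpen.mem_nhds (mem_iInter₂.1 ha.2 n (Finset.mem_Ico.1 hn).1))
  obtain ⟨k, hk, hkk⟩ := (hsmall.and (eventually_ge_atTop k₀)).exists
  refine hx k ⟨hk₀ k hkk, mem_iInter₂.2 fun n hn => ?_⟩
  rcases lt_or_ge n N with hnN | hnN
  · exact hk n (Finset.mem_Ico.2 ⟨hn, hnN⟩)
  · exact hN n hnN (Or.inr ⟨k - k₀, by simp [Nat.sub_add_cancel hkk]⟩)

lemma eventually_mem_of_omegaScottOpen {X : Type*} [TopologicalSpace X] [SequentialSpace X]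
    {U : ℕ → Opens X} {Uinf : Opens X}
    (h : ∀ K : Set X, IsCompact K → K ⊆ Uinf → ∀ᶠ n in atTop, K ⊆ U n)
    {H : Set (Opens X)} (hH : OmegaScottOpen H) (hU : Uinf ∈ H) :
    ∀ᶠ n in atTop, U n ∈ H := by
  let V : ℕ → Opens X := fun m => ⟨_, isOpen_inter_tail h m⟩
  have hmono : Monotone V := fun m m' hmm x hx =>
    ⟨hx.1, mem_iInter₂.2 fun n hn => mem_iInter₂.1 hx.2 n (hmm.trans hn)⟩
  have hsup : Uinf ≤ sSup (range V) := by
    intro x hx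
    obtain ⟨m, hm⟩ := eventually_atTop.1 (h {x} isCompact_singleton (singleton_subset_iff.2 hx))
    exact Opens.mem_sSup.2 ⟨V m, mem_range_self m, hx,
      mem_iInter₂.2 fun n hn => hm n hn rfl⟩
  obtain ⟨_, ⟨m, rfl⟩, hm⟩ := hH.2 (range V) (range_nonempty V) (countable_range V)
    (directedOn_range.2 hmono.directed_le) (hH.1 hU hsup)
  filter_upwards [eventually_ge_atTop m] with n hn
  exact hH.1 hm fun x hx => mem_iInter₂.1 hx.2 n hn

/-- In a sequential space `X`, convergence of a sequence of opens to an open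
`U∞` is the same for the Scott, ω-Scott, compact-open and countably-compact-open topologies
on `O(X)`. -/
theorem statement2 {X : Type*} [TopologicalSpace X] [SequentialSpace X]
    (U : ℕ → Opens X) (Uinf : Opens X) :
    [Tendsto U atTop (@nhds (Opens X) (scottTopology' (Opens X)) Uinf),
     Tendsto U atTop (@nhds (Opens X) (omegaScottTopology (Opens X)) Uinf),
     Tendsto U atTop (@nhds (Opens X) (coTopology X) Uinf),
     Tendsto U atTop (@nhds (Opens X) (ccoTopology X) Uinf)].TFAE := by
  unfold scottTopology' omegaScottTopology coTopology ccoTopology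
  simp only [tendsto_nhds_generateFrom_iff]
  tfae_have 2 → 1 := fun h H hH => h H (ScottOpen.omegaScottOpen hH)
  tfae_have 1 → 3 := by
    rintro h _ ⟨K, hK, rfl⟩
    exact h _ (scottOpen_eOpens hK)
  tfae_have 2 → 4 := by
    rintro h _ ⟨K, hK, rfl⟩
    exact h _ (omegaScottOpen_eOpens hK)
  tfae_have 4 → 3 := by
    rintro h _ ⟨K, hK, rfl⟩
    exact h _ ⟨K, countablyCompactSet_of_isCompact hK, rfl⟩
  tfae_have 3 → 2 := fun h H hH hU =>
    eventually_mem_of_omegaScottOpen (fun K hK hKU => h _ ⟨K, hK, rfl⟩ hKU) hH hU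
  tfae_finish
end

section
/- Let X be a sequential topological space. A set H ⊆ O(X) is sequentially open with respect to the compact-open topology on O(X) if and only if H is ω-Scott open; in particular, the ω-Scott topology on O(X) is sequential (every set that is sequentially open with respect to the ω-Scott topology is ω-Scott open). -/
/-!
Both directions rest on identifying enough convergent sequences in `O(X)`.

The ω-Scott topology is finer than the compact-open topology, because `e K` is ω-Scott open for
`K` compact. In the ω-Scott topology the constant sequence `V` converges to every `U ≤ V`, and an
increasing sequence converges to its supremum; hence a set sequentially open for either topology
is an upper set (first kind of sequence) and is inaccessible by countable directed suprema
(second kind, as a countable directed family has a cofinal increasing sequence). This is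
`omegaScottOpen_of_seqOpen`.

Conversely, let `u n → U` in the compact-open topology, and put `W n = U ∩ ⋂ k ≥ n, u k`.
The point is that each `W n` is open (`isOpen_tailInter`). As `X` is sequential it suffices that
`W n` is sequentially open: if `x j → x ∈ W n`, a tail of `x` together with its limit is a compact
subset of `U`, so it lies in `u k` for all `k ≥ m`, for some `m`; only the finitely many open sets
`u k` with `n ≤ k < m` remain, and each of them contains `x j` eventually. The `W n` increase to
`U`, so an ω-Scott open set containing `U` contains some `W n`, hence all `u k` with `k ≥ n`.
-/

open TopologicalSpace Filter Set

/-- A set is sequentially open w.r.t. a topology `t` if every sequence converging (w.r.t. `t`)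
to a point of the set is eventually in the set. -/
def SeqOpenWrt {L : Type*} (t : TopologicalSpace L) (H : Set L) : Prop :=
  ∀ ⦃a : L⦄, a ∈ H → ∀ ⦃u : ℕ → L⦄, Tendsto u atTop (@nhds L t a) → ∀ᶠ n in atTop, u n ∈ H

lemma omegaScottTopology_le_coTopology (X : Type*) [TopologicalSpace X] :
    omegaScottTopology (Opens X) ≤ coTopology X := by
  refine le_generateFrom ?_
  rintro _ ⟨K, hK, rfl⟩
  refine isOpen_generateFrom_of_mem (omegaScottOpen_eOpens ?_)
  intro C _ hCo hKC
  obtain ⟨F, hFC, hF⟩ := hK.elim_finite_subcover_image (b := C) (c := id) hCo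
    (by simpa [sUnion_eq_biUnion] using hKC)
  exact ⟨F, hFC, by simpa [sUnion_eq_biUnion] using hF⟩

lemma tendsto_omegaScott_iff {L : Type*} [CompleteLattice L] {u : ℕ → L} {a : L} :
    Tendsto u atTop (@nhds L (omegaScottTopology L) a) ↔
      ∀ H : Set L, OmegaScottOpen H → a ∈ H → ∀ᶠ n in atTop, u n ∈ H := by
  unfold omegaScottTopology
  rw [tendsto_nhds_generateFrom_iff]
  rfl

lemma omegaScottOpen_of_seqOpen {L : Type*} [CompleteLattice L] {H : Set L}
    (hH : SeqOpenWrt (omegaScottTopology L) H) : OmegaScottOpen H := by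
  constructor
  · intro U V hU hUV
    have h := hH hU (u := fun _ => V)
      (tendsto_omegaScott_iff.2 fun G hG hUG => Eventually.of_forall fun _ => hG.1 hUG hUV)
    exact h.exists.choose_spec
  · intro D hne hcnt hdir hsup
    obtain ⟨f, rfl⟩ := hcnt.exists_eq_range hne
    have hf : Directed (· ≤ ·) f := directedOn_range.1 hdir
    let g : ℕ → L := f ∘ hf.sequence f
    have hg : Monotone g := hf.sequence_mono
    have hfg : sSup (range f) ≤ sSup (range g) := by
      refine sSup_le ?_
      rintro _ ⟨n, rfl⟩
      exact (hf.rel_sequence n).trans (le_sSup (mem_range_self _))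
    have h := hH hsup (u := g) (tendsto_omegaScott_iff.2 fun G hG hUG => by
      obtain ⟨_, ⟨n, rfl⟩, hn⟩ := hG.2 (range g) (range_nonempty _) (countable_range _)
        (directedOn_range.2 hg.directed_le) (hG.1 hUG hfg)
      exact (eventually_ge_atTop n).mono fun m hm => hG.1 hn (hg hm))
    obtain ⟨n, hn⟩ := h.exists
    exact ⟨g n, mem_range_self _, hn⟩

lemma eventually_subset_of_tendsto_co {X : Type*} [TopologicalSpace X] {u : ℕ → Opens X}
    {U : Opens X} (hu : Tendsto u atTop (@nhds _ (coTopology X) U)) {K : Set X}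
    (hK : IsCompact K) (hKU : K ⊆ U) : ∃ m, ∀ k ≥ m, K ⊆ (u k : Set X) := by
  unfold coTopology at hu
  exact eventually_atTop.1 (tendsto_nhds_generateFrom_iff.1 hu _ ⟨K, hK, rfl⟩ hKU)

/-- If `u` converges to `U` in the compact-open topology on the opens of a sequential space, the
infinite intersections `U ∩ ⋂ k ≥ n, u k` are open. -/
lemma isOpen_tailInter_s3 {X : Type*} [TopologicalSpace X] [SequentialSpace X] {u : ℕ → Opens X}
    {U : Opens X} (hu : Tendsto u atTop (@nhds _ (coTopology X) U)) (n : ℕ) :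
    IsOpen {x : X | x ∈ U ∧ ∀ k ≥ n, x ∈ u k} := by
  rw [← isClosed_compl_iff]
  refine IsSeqClosed.isClosed ?_
  rintro x a hx ha ⟨haU, han⟩
  obtain ⟨J, hJ⟩ := eventually_atTop.1 (ha.eventually (U.2.mem_nhds haU))
  have hshift : Tendsto (fun j => x (j + J)) atTop (nhds a) := (tendsto_add_atTop_iff_nat J).2 ha
  obtain ⟨m, hm⟩ := eventually_subset_of_tendsto_co hu hshift.isCompact_insert_range (by
    rintro _ (rfl | ⟨j, rfl⟩)
    · exact haU
    · exact hJ _ (Nat.le_add_left _ _))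
  have hfin : ∀ᶠ j in atTop, ∀ k ∈ Ico n m, x j ∈ u k :=
    (eventually_all_finite (finite_Ico n m)).2 fun k hk =>
      ha.eventually ((u k).2.mem_nhds (han k hk.1))
  obtain ⟨j, hjJ, hj⟩ := ((eventually_ge_atTop J).and hfin).exists
  refine hx j ⟨hJ j hjJ, fun k hk => ?_⟩
  rcases lt_or_ge k m with hkm | hkm
  · exact hj k ⟨hk, hkm⟩
  · refine hm k hkm (Or.inr ⟨j - J, ?_⟩)
    simp only [Nat.sub_add_cancel hjJ]

lemma seqOpen_co_of_omegaScottOpen {X : Type*} [TopologicalSpace X] [SequentialSpace X]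
    {H : Set (Opens X)} (hH : OmegaScottOpen H) : SeqOpenWrt (coTopology X) H := by
  intro U hU u hu
  let W : ℕ → Opens X := fun n => ⟨_, isOpen_tailInter_s3 hu n⟩
  have hW : Monotone W := fun n m hnm x hx => ⟨hx.1, fun k hk => hx.2 k (hnm.trans hk)⟩
  have hUW : U ≤ sSup (range W) := by
    intro x hx
    obtain ⟨m, hm⟩ := eventually_subset_of_tendsto_co hu (isCompact_singleton (x := x))
      (singleton_subset_iff.2 hx)
    exact Opens.mem_sSup.2 ⟨W m, mem_range_self _, hx, fun k hk => hm k hk rfl⟩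
  obtain ⟨_, ⟨n, rfl⟩, hn⟩ := hH.2 (range W) (range_nonempty _) (countable_range _)
    (directedOn_range.2 hW.directed_le) (hH.1 hU hUW)
  exact (eventually_ge_atTop n).mono fun k hk => hH.1 hn fun x hx => hx.2 k hk

/-- For a sequential space `X`: a collection `H` of opens is sequentially open
w.r.t. the compact-open topology on `O(X)` iff `H` is ω-Scott open; in particular every set
sequentially open w.r.t. the ω-Scott topology is ω-Scott open (the ω-Scott topology is
sequential). -/
theorem statement3 {X : Type*} [TopologicalSpace X] [SequentialSpace X] :
    (∀ H : Set (Opens X), SeqOpenWrt (coTopology X) H ↔ OmegaScottOpen H) ∧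
    (∀ H : Set (Opens X), SeqOpenWrt (omegaScottTopology (Opens X)) H → OmegaScottOpen H) := by
  refine ⟨fun H => ⟨fun hH => omegaScottOpen_of_seqOpen ?_, seqOpen_co_of_omegaScottOpen⟩,
    fun H => omegaScottOpen_of_seqOpen⟩
  exact fun a ha u hu =>
    hH ha (hu.mono_right (nhds_mono (omegaScottTopology_le_coTopology X)))
end

section
/- Let X be a sequential topological space that is sequentially Hausdorff. Then every singleton {x} ⊆ X is closed, and the map x ↦ X \ {x} is a continuous function from X to O(X) equipped with the ω-Scott topology. -/
/-!
If `H` is ω-Scott open and its preimage under `x ↦ X \ {x}` were not sequentially open, there would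
be a sequence `y` converging to `x` with `X \ {x} ∈ H` but `X \ {y n} ∉ H` for all `n`. Uniqueness of
limits makes each `{x} ∪ {y k | k ≥ n}` closed (`isClosed_tail`), and it makes the complements of these
sets an increasing sequence of opens with union `X \ {x}`, since a value different from `x` is taken
only finitely often by `y` (`eq_of_frequently_eq`). Hence one of these complements lies in `H`; it is
contained in `X \ {y n}`, a contradiction.
-/

open TopologicalSpace Filter Set

lemma SeqHausdorff.eq_of_frequently_eq {X : Type*} [TopologicalSpace X] (hX : SeqHausdorff X)
    {z : ℕ → X} {a c : X} (hz : Tendsto z atTop (nhds a)) (hc : ∃ᶠ j in atTop, z j = c) :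
    a = c := by
  obtain ⟨φ, hφ, h⟩ := extraction_of_frequently_atTop hc
  refine hX (z ∘ φ) a c (hz.comp hφ.tendsto_atTop) ?_
  rw [show z ∘ φ = fun _ => c from funext h]
  exact tendsto_const_nhds

lemma SeqHausdorff.isClosed_singleton {X : Type*} [TopologicalSpace X] [SequentialSpace X]
    (hX : SeqHausdorff X) (x : X) : IsClosed ({x} : Set X) := by
  apply IsSeqClosed.isClosed
  intro z a hz ha
  exact hX.eq_of_frequently_eq ha (Eventually.of_forall hz).frequently

/-- A tail of a convergent sequence together with its limit is closed: a convergent sequence in it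
either repeats one value infinitely often, or is `y ∘ k` with `k → ∞`. -/
lemma SeqHausdorff.isClosed_tail {X : Type*} [TopologicalSpace X] [SequentialSpace X]
    (hX : SeqHausdorff X) {y : ℕ → X} {x : X} (hy : Tendsto y atTop (nhds x)) (n : ℕ) :
    IsClosed {p : X | p = x ∨ ∃ k, n ≤ k ∧ p = y k} := by
  apply IsSeqClosed.isClosed
  intro z a hz ha
  by_cases hfx : ∃ᶠ j in atTop, z j = x
  · exact Or.inl (hX.eq_of_frequently_eq ha hfx)
  have hnx : ∀ᶠ j in atTop, z j ≠ x := not_frequently.1 hfx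
  have hk : ∀ j, ∃ k, z j ≠ x → n ≤ k ∧ z j = y k := by
    intro j
    rcases hz j with h | ⟨k, h⟩
    · exact ⟨0, fun h' => absurd h h'⟩
    · exact ⟨k, fun _ => h⟩
  choose k hk using hk
  by_cases hm : ∃ m, ∃ᶠ j in atTop, k j = m
  · obtain ⟨m, hm⟩ := hm
    have hf := hm.and_eventually hnx
    obtain ⟨j, hj, hjx⟩ := hf.exists
    refine Or.inr ⟨m, hj ▸ (hk j hjx).1, hX.eq_of_frequently_eq ha (hf.mono ?_)⟩
    rintro i ⟨rfl, hi⟩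
    exact (hk i hi).2
  · have hkt : Tendsto k atTop atTop := by
      have h : Tendsto k atTop cofinite :=
        le_cofinite_iff_eventually_ne.2 fun m =>
          eventually_map.2 (not_frequently.1 (not_exists.1 hm m))
      rwa [Nat.cofinite_eq_atTop] at h
    exact Or.inl (hX z a x ha ((hy.comp hkt).congr' (hnx.mono fun j hj => (hk j hj).2.symm)))

/-- In a sequentially Hausdorff sequential space every singleton is closed
(so `{x}ᶜ = interior {x}ᶜ` is open), and the map `x ↦ X \ {x}` is continuous from `X` to
`O(X)` with the ω-Scott topology. -/
theorem statement6 {X : Type*} [TopologicalSpace X] [SequentialSpace X]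
    (hX : SeqHausdorff X) :
    (∀ x : X, IsClosed ({x} : Set X)) ∧
    (∀ x : X, interior ({x}ᶜ : Set X) = ({x}ᶜ : Set X)) ∧
    @Continuous X (Opens X) _ (omegaScottTopology (Opens X))
      (fun x => ⟨interior ({x}ᶜ : Set X), isOpen_interior⟩) := by
  have hint : ∀ x : X, interior ({x}ᶜ : Set X) = ({x}ᶜ : Set X) := fun x =>
    (hX.isClosed_singleton x).isOpen_compl.interior_eq
  refine ⟨hX.isClosed_singleton, hint, ?_⟩
  refine continuous_generateFrom_iff.2 fun H hH => ?_
  rw [← isClosed_compl_iff]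
  apply IsSeqClosed.isClosed
  intro y x hyH hy hxH
  let U : ℕ → Opens X := fun n =>
    ⟨{p : X | p = x ∨ ∃ k, n ≤ k ∧ p = y k}ᶜ, (hX.isClosed_tail hy n).isOpen_compl⟩
  have hU : Monotone U := by
    rintro m n hmn p hp (h | ⟨k, hk, h⟩)
    · exact hp (Or.inl h)
    · exact hp (Or.inr ⟨k, hmn.trans hk, h⟩)
  have hsup : (⟨interior ({x}ᶜ : Set X), isOpen_interior⟩ : Opens X) ≤ sSup (range U) := by
    intro p hp
    have hpx : p ≠ x := interior_subset hp
    have hev : ∀ᶠ k in atTop, y k ≠ p :=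
      not_frequently.1 fun h => hpx (hX.eq_of_frequently_eq hy h).symm
    obtain ⟨n, hn⟩ := eventually_atTop.1 hev
    refine Opens.mem_sSup.2 ⟨U n, mem_range_self n, ?_⟩
    rintro (h | ⟨k, hk, h⟩)
    · exact hpx h
    · exact hn k hk h.symm
  obtain ⟨_, ⟨n, rfl⟩, hn⟩ := hH.2 (range U) (range_nonempty U) (countable_range U)
    (directedOn_range.2 hU.directed_le) (hH.1 hxH hsup)
  refine hyH n (hH.1 hn ?_)
  intro p hp
  change p ∈ interior ({y n}ᶜ : Set X)
  rw [hint]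
  exact fun h => hp (Or.inr ⟨n, le_rfl, h⟩)
end

section
/- Let X be a sequential topological space that is sequentially Hausdorff. Let (H_n)_{n∈ℕ} be a sequence of ω-Scott open subsets of O(X) converging to an ω-Scott open set H_∞ with respect to the ω-Scott topology on O(O(X)), and let (x_n) be a sequence in X converging to x_∞. If x_n ∈ ⋂H_n for all n ∈ ℕ, then x_∞ ∈ ⋂H_∞. -/
/-!
Suppose `U ∈ H∞` but `x∞ ∉ U`. By uniqueness of sequential limits each set `{x∞} ∪ {xₙ | n ≥ m}` is
sequentially closed, hence closed (`SeqHausdorff.isClosed_insert_tail`), so its complement `Vₘ` in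
`U` is open. The `Vₘ` increase with `m`, and their union is `U`: a point equal to infinitely many `xₙ` would be the
limit `x∞ ∉ U`. Since `H∞` is ω-Scott open, `Vₘ ∈ H∞` for some `m`. Evaluation at `Vₘ` is an
ω-Scott open condition on `O(O(X))` (`omegaScottOpen_mem`), so `Vₘ ∈ Hₙ` for some `n ≥ m`; then
`xₙ ∈ ⋂ Hₙ ⊆ Vₘ`, contradicting the choice of `Vₘ`.
-/

open TopologicalSpace Filter Set

/-- A value taken infinitely often by a convergent sequence is its limit. -/
lemma SeqHausdorff.eq_of_frequently {X : Type*} [TopologicalSpace X] (hX : SeqHausdorff X)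
    {y : ℕ → X} {b c : X} (hy : Tendsto y atTop (nhds b)) (hc : ∃ᶠ k in atTop, y k = c) :
    c = b := by
  obtain ⟨φ, hφ, hφc⟩ := extraction_of_frequently_atTop hc
  refine hX (y ∘ φ) c b ?_ (hy.comp hφ.tendsto_atTop)
  rw [show y ∘ φ = fun _ => c from funext hφc]
  exact tendsto_const_nhds

/-- A tail of a convergent sequence together with the limit is closed. -/
lemma SeqHausdorff.isClosed_insert_tail {X : Type*} [TopologicalSpace X] [SequentialSpace X]
    (hX : SeqHausdorff X) {x : ℕ → X} {a : X} (hx : Tendsto x atTop (nhds a)) (m : ℕ) :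
    IsClosed (insert a (x '' Ici m)) := by
  refine IsSeqClosed.isClosed fun y b hyK hy => ?_
  have hidx : ∀ k, ∃ n, y k ≠ a → m ≤ n ∧ x n = y k := by
    intro k
    rcases hyK k with h | ⟨n, hn, h⟩
    · exact ⟨0, fun h' => absurd h h'⟩
    · exact ⟨n, fun _ => ⟨hn, h⟩⟩
  choose n hn using hidx
  by_cases ha : ∃ᶠ k in atTop, y k = a
  · exact Or.inl (hX.eq_of_frequently hy ha).symm
  have ha' : ∀ᶠ k in atTop, y k ≠ a := not_frequently.1 ha
  by_cases hv : ∃ v, ∃ᶠ k in atTop, n k = v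
  · obtain ⟨v, hv⟩ := hv
    have hv' := hv.and_eventually ha'
    obtain ⟨k, hk, hka⟩ := hv'.exists
    refine Or.inr ⟨v, hk ▸ (hn k hka).1, hX.eq_of_frequently hy (hv'.mono ?_)⟩
    rintro j ⟨rfl, hj⟩
    exact (hn j hj).2.symm
  · -- No index recurs infinitely often, so the indices tend to infinity and `y` converges to `a`.
    push Not at hv
    have hlim : Tendsto n atTop atTop := by
      refine tendsto_atTop.2 fun N => ?_
      filter_upwards [(finite_Iio N).eventually_all.2 fun v _ => hv v] with k hk
      exact not_lt.1 fun h => hk (n k) h rfl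
    exact Or.inl (hX y b a hy
      ((hx.comp hlim).congr' (ha'.mono fun k hk => (hn k hk).2)))

/-- Containing a given open set `U` is an ω-Scott open condition on elements of `O(O(X))`. -/
lemma omegaScottOpen_mem {X : Type*} [TopologicalSpace X] (U : Opens X) :
    OmegaScottOpen {G : OO X | U ∈ G.1} := by
  refine ⟨fun G G' hG hle => hle hG, ?_⟩
  rintro D - - - ⟨_, ⟨G, hG, rfl⟩, hU⟩
  exact ⟨G, hG, hU⟩

/-- In a sequentially Hausdorff sequential space `X`: if ω-Scott open
collections `Hₙ → H∞` in the ω-Scott topology on `O(O(X))`, `xₙ → x∞` in `X` and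
`xₙ ∈ ⋂ Hₙ` for all `n`, then `x∞ ∈ ⋂ H∞`. -/
theorem statement8 {X : Type*} [TopologicalSpace X] [SequentialSpace X]
    (hX : SeqHausdorff X) (H : ℕ → OO X) (Hinf : OO X)
    (hH : Tendsto H atTop (@nhds (OO X) (omegaScottTopology (OO X)) Hinf))
    (x : ℕ → X) (xinf : X) (hx : Tendsto x atTop (nhds xinf))
    (hmem : ∀ n : ℕ, x n ∈ ⋂ U ∈ (H n).1, (U : Set X)) :
    xinf ∈ ⋂ U ∈ Hinf.1, (U : Set X) := by
  simp only [mem_iInter] at hmem ⊢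
  intro U hU
  by_contra hxU
  let V : ℕ → Opens X := fun m =>
    ⟨(U : Set X) \ insert xinf (x '' Ici m), U.2.sdiff (hX.isClosed_insert_tail hx m)⟩
  have hmono : Monotone V := fun i j hij =>
    sdiff_subset_sdiff_right (insert_subset_insert (image_mono (Ici_subset_Ici.2 hij)))
  have hsup : U ≤ sSup (range V) := by
    intro y hy
    have hya : y ≠ xinf := by
      rintro rfl
      exact hxU hy
    have hev : ∀ᶠ n in atTop, x n ≠ y :=
      not_frequently.1 fun h => hya (hX.eq_of_frequently hx h)
    obtain ⟨m, hm⟩ := eventually_atTop.1 hev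
    refine Opens.mem_sSup.2 ⟨V m, mem_range_self m, hy, ?_⟩
    rintro (h | ⟨n, hn, h⟩)
    · exact hya h
    · exact hm n hn h
  obtain ⟨_, ⟨m, rfl⟩, hVm⟩ := Hinf.2.2 (range V) (range_nonempty V) (countable_range V)
    hmono.directed_le.directedOn_range (Hinf.2.1 hU hsup)
  have hev : ∀ᶠ n in atTop, V m ∈ (H n).1 :=
    letI := omegaScottTopology (OO X)
    hH (IsOpen.mem_nhds (isOpen_generateFrom_of_mem (omegaScottOpen_mem (V m))) hVm)
  obtain ⟨n, hn, hmn⟩ := (hev.and (eventually_ge_atTop m)).exists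
  exact (hmem n (V m) hn).2 (Or.inr ⟨n, hmn, rfl⟩)
end

section
/- Let X be a sequential topological space, let U ⊆ X be open and let (x_n)_{n∈ℕ} be a sequence in X. Then (x_n) has a subsequence converging to some element of U if and only if the sequence of open sets (X \ closure{x_n})_{n∈ℕ} does NOT converge to U with respect to the compact-open topology on O(X). -/
/-! The argument rests on the opens `V N = U \ ⋃ n ≥ N, closure {x n}`.

If a subsequence of `x` converges to `a ∈ U`, a tail of it together with `a` is a compact subset of
`U` that meets `closure {x n}` for infinitely many `n`, so there is no convergence to `U`.

Conversely, suppose no subsequence of `x` converges to a point of `U`. If `w j → a ∈ U` with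
`w j ∈ closure {x (k j)}` and `k j → ∞`, then `x (k j) → a` as well, which is excluded
(`exists_subseq_of_specializes`). Taking `w` constant shows that the `V N` cover `U`. Taking `w`
in `⋃ n ≥ N, closure {x n}` with limit outside that set shows that `V N` is sequentially open
(`isOpen_diff_iUnion_closure`): each finite partial union is closed and misses `a`, so the indices
`k j` do tend to infinity. As `X` is sequential, the `V N` form an increasing open cover of `U`;
a compact `K ⊆ U` lies in some `V N`, so it avoids `closure {x n}` for all `n ≥ N`. -/

open TopologicalSpace Filter Set

/-- If `w j → a` and `w j ∈ closure {x (k j)}` eventually, then every open neighbourhood of `a`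
eventually contains `x (k j)`; when `k j → ∞` this yields a subsequence of `x` converging to `a`. -/
lemma exists_subseq_of_specializes {X : Type*} [TopologicalSpace X] {x w : ℕ → X} {k : ℕ → ℕ}
    {a : X} (hw : Tendsto w atTop (nhds a)) (hk : Tendsto k atTop atTop)
    (h : ∀ᶠ j in atTop, x (k j) ⤳ w j) :
    ∃ φ : ℕ → ℕ, StrictMono φ ∧ Tendsto (x ∘ φ) atTop (nhds a) := by
  have hx : Tendsto (x ∘ k) atTop (nhds a) := by
    rw [tendsto_nhds]
    intro s hs ha
    filter_upwards [h, hw (hs.mem_nhds ha)] with j hj hjs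
    exact hj.mem_open hs hjs
  obtain ⟨θ, hθ, hkθ⟩ := strictMono_subseq_of_tendsto_atTop hk
  exact ⟨k ∘ θ, hkθ, hx.comp hθ.tendsto_atTop⟩

/-- The set in the conclusion is `U \ ⋃ n ≥ N, closure {x n}`, since `x n ⤳ y` means
`y ∈ closure {x n}`. -/
lemma isOpen_diff_iUnion_closure {X : Type*} [TopologicalSpace X] [SequentialSpace X]
    (U : Opens X) (x : ℕ → X)
    (hx : ∀ (φ : ℕ → ℕ) (a : X), StrictMono φ → a ∈ U → ¬ Tendsto (x ∘ φ) atTop (nhds a))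
    (N : ℕ) : IsOpen {y | y ∈ U ∧ ∀ n ≥ N, ¬ x n ⤳ y} := by
  rw [← isClosed_compl_iff]
  apply IsSeqClosed.isClosed
  rintro w a hw hwa ⟨haU, ha⟩
  have hex : ∀ᶠ j in atTop, ∃ n, N ≤ n ∧ x n ⤳ w j := by
    filter_upwards [hwa (U.isOpen.mem_nhds haU)] with j hj
    by_contra! hcon
    exact hw j ⟨hj, hcon⟩
  obtain ⟨k, hk⟩ := hex.choice
  have hk_top : Tendsto k atTop atTop := by
    rw [tendsto_atTop]
    intro M
    -- The finitely many closed sets `closure {x n}`, `N ≤ n < M`, all miss the limit `a`.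
    have hfin : ∀ᶠ j in atTop, ∀ n ∈ Finset.Ico N M, ¬ x n ⤳ w j := by
      rw [Filter.eventually_all_finset]
      intro n hn
      have han : a ∈ (closure {x n})ᶜ := fun h =>
        ha n (Finset.mem_Ico.1 hn).1 (specializes_iff_mem_closure.2 h)
      filter_upwards [hwa (isClosed_closure.isOpen_compl.mem_nhds han)] with j hj h
      exact hj (specializes_iff_mem_closure.1 h)
    filter_upwards [hk, hfin] with j hj hjf
    by_contra! hlt
    exact hjf (k j) (Finset.mem_Ico.2 ⟨hj.1, hlt⟩) hj.2
  obtain ⟨φ, hφ, hφa⟩ := exists_subseq_of_specializes hwa hk_top (hk.mono fun _ h => h.2)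
  exact hx φ a hφ haU hφa

/-- In a sequential space `X`, for open `U` and a sequence `(xₙ)`: `(xₙ)` has a
subsequence converging to a point of `U` iff the sequence of opens `(X \ closure {xₙ})ₙ` does
not converge to `U` in the compact-open topology on `O(X)`. -/
theorem statement12 {X : Type*} [TopologicalSpace X] [SequentialSpace X]
    (U : Opens X) (x : ℕ → X) :
    (∃ (φ : ℕ → ℕ) (a : X), StrictMono φ ∧ a ∈ U ∧ Tendsto (x ∘ φ) atTop (nhds a)) ↔
      ¬ Tendsto (fun n : ℕ => (⟨(closure {x n})ᶜ, isClosed_closure.isOpen_compl⟩ : Opens X))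
          atTop (@nhds (Opens X) (coTopology X) U) := by
  constructor
  · rintro ⟨φ, a, hφ, haU, hlim⟩ hT
    obtain ⟨N, hN⟩ := eventually_atTop.1 (hlim (U.isOpen.mem_nhds haU))
    have hK : IsCompact (insert a (range fun n => x (φ (n + N)))) :=
      (hlim.comp (tendsto_add_atTop_nat N)).isCompact_insert_range
    have hKU : insert a (range fun n => x (φ (n + N))) ⊆ (U : Set X) := by
      rintro _ (rfl | ⟨n, rfl⟩)
      · exact haU
      · exact hN (n + N) (Nat.le_add_left N n)
    have hev := (TopologicalSpace.tendsto_nhds_generateFrom_iff.1 hT) _ ⟨_, hK, rfl⟩ hKU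
    obtain ⟨M, hM⟩ := eventually_atTop.1 hev
    exact hM (φ (M + N)) ((Nat.le_add_right M N).trans hφ.le_apply)
      (mem_insert_of_mem a ⟨M, rfl⟩) (subset_closure rfl)
  · intro hT
    by_contra! hx
    refine hT (TopologicalSpace.tendsto_nhds_generateFrom_iff.2 ?_)
    rintro _ ⟨K, hK, rfl⟩ hKU
    have hcover : K ⊆ ⋃ N : ℕ, {y | y ∈ U ∧ ∀ n ≥ N, ¬ x n ⤳ y} := by
      intro y hy
      by_contra hcon
      have hex : ∀ N, ∃ n ≥ N, x n ⤳ y := by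
        intro N
        by_contra! h
        exact hcon (mem_iUnion.2 ⟨N, hKU hy, h⟩)
      choose k hk hky using hex
      obtain ⟨φ, hφ, hφy⟩ := exists_subseq_of_specializes (w := fun _ => y) tendsto_const_nhds
        (tendsto_atTop_mono hk tendsto_id) (Eventually.of_forall hky)
      exact hx φ y hφ (hKU hy) hφy
    have hmono : Monotone fun N : ℕ => {y | y ∈ U ∧ ∀ n ≥ N, ¬ x n ⤳ y} :=
      fun _ _ hNM _ hy => ⟨hy.1, fun n hn => hy.2 n (hNM.trans hn)⟩
    obtain ⟨N, hN⟩ := hK.elim_directed_cover _ (isOpen_diff_iUnion_closure U x hx) hcover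
      hmono.directed_le
    filter_upwards [eventually_ge_atTop N] with n hn y hy hyn
    exact (hN hy).2 n hn (specializes_iff_mem_closure.2 hyn)
end

section
/- Let X be a sequential topological space that is sequentially Hausdorff. Let (H_n)_{n∈ℕ} be a sequence of nonempty ω-Scott open subsets of O(X) converging to a nonempty ω-Scott open set H_∞ with respect to the ω-Scott topology on O(O(X)), and let U ⊆ X be open with ⋂H_∞ ⊆ U. Then there exists n₀ ∈ ℕ such that ⋂H_n ⊆ U for all n ≥ n₀. (That is, the intersection map H ↦ ⋂H is sequentially continuous from the nonempty ω-Scott open subsets of O(X) into the upper Vietoris topology.) -/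
/-!
If the conclusion fails, there are infinitely many `n` with a point of `⋂ Hₙ` outside `U`; these
points form a sequence `y`. Evaluation at a fixed open set `V` is ω-Scott continuous on `O(O(X))`,
so every `V ∈ H∞` belongs to almost all `Hₙ` and hence contains almost all `y k`.

Consequently no `V ∈ H∞` can be exhausted by the open sets `V \ {y k | k ≥ m}`: by ω-Scott openness
one of them would belong to `H∞`, although it misses a tail of `y` (`false_of_removable_tails`).
Applied to `V = X`, this shows that `y` has a convergent subsequence, since otherwise all tails of
`y` are closed. Let `p` be the limit of that subsequence; `p ∉ U` because `U` is open. If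
`p ∉ V` for some `V ∈ H∞`, the tails of the subsequence together with `p` are closed (limits are
unique and `X` is sequential), and again `V` is exhausted by the forbidden open sets. Hence
`p ∈ ⋂ H∞ ⊆ U`, a contradiction.
-/

open TopologicalSpace Filter Set

/-- Membership of a fixed open set `V` is an ω-Scott open condition, so it passes from a limit to
almost all terms of a sequence. -/
lemma eventually_mem_of_tendsto_OO {X : Type*} [TopologicalSpace X] {H : ℕ → OO X} {Hinf : OO X}
    (hH : Tendsto H atTop (@nhds (OO X) (omegaScottTopology (OO X)) Hinf))
    {V : Opens X} (hV : V ∈ Hinf.1) : ∀ᶠ n in atTop, V ∈ (H n).1 := by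
  have hS : OmegaScottOpen {G : OO X | V ∈ G.1} := by
    refine ⟨fun G G' hG hle => hle hG, ?_⟩
    rintro D - - - ⟨_, ⟨G, hG, rfl⟩, hVG⟩
    exact ⟨G, hG, hVG⟩
  let := omegaScottTopology (OO X)
  have hopen : IsOpen {G : OO X | V ∈ G.1} := isOpen_generateFrom_of_mem hS
  exact hH (hopen.mem_nhds hV)

lemma SeqHausdorff.t1Space {X : Type*} [TopologicalSpace X] [SequentialSpace X]
    (hX : SeqHausdorff X) : T1Space X := by
  refine ⟨fun a => IsSeqClosed.isClosed fun z p hz hp => ?_⟩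
  have : z = fun _ => a := funext hz
  subst this
  exact hX _ _ _ hp tendsto_const_nhds

/-- A limit of a sequence of points of a tail of `y` either lies in that tail or is the limit of a
subsequence of `y`. -/
lemma mem_tail_or_subseq_limit {X : Type*} [TopologicalSpace X] [T1Space X] (y z : ℕ → X) (m : ℕ)
    (hz : ∀ i, z i ∈ y '' Ici m) {p : X} (hp : Tendsto z atTop (nhds p)) :
    p ∈ y '' Ici m ∨ ∃ σ : ℕ → ℕ, StrictMono σ ∧ Tendsto (y ∘ σ) atTop (nhds p) := by
  choose k hkm hk using hz
  by_cases h : Tendsto k atTop atTop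
  · obtain ⟨φ, hφ, hkφ⟩ := strictMono_subseq_of_tendsto_atTop h
    refine Or.inr ⟨k ∘ φ, hkφ, ?_⟩
    have : y ∘ (k ∘ φ) = z ∘ φ := funext fun i => hk (φ i)
    rw [this]
    exact hp.comp hφ.tendsto_atTop
  · -- The indices return infinitely often below some `b`, so `z` returns to a finite, closed set.
    rw [tendsto_atTop] at h
    push Not at h
    obtain ⟨b, hb⟩ := h
    have hcl : IsClosed (y '' Ico m b) := ((finite_Ico m b).image y).isClosed
    have hfreq : ∃ᶠ i in atTop, z i ∈ y '' Ico m b :=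
      hb.mono fun i hi => ⟨k i, ⟨hkm i, hi⟩, hk i⟩
    exact Or.inl (image_mono Ico_subset_Ici_self (hcl.mem_of_frequently_of_tendsto hfreq hp))

/-- If every member of an ω-Scott open `P` contains almost all terms of `y`, then no `V ∈ P` is the
increasing union of the open sets `V \ {y k | k ≥ m}`. -/
lemma false_of_removable_tails {X : Type*} [TopologicalSpace X] {P : Set (Opens X)}
    (hP : OmegaScottOpen P) (y : ℕ → X) (hy : ∀ V ∈ P, ∀ᶠ k in atTop, y k ∈ V)
    {V : Opens X} (hV : V ∈ P) (hopen : ∀ m, IsOpen ((V : Set X) \ y '' Ici m))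
    (hleave : ∀ v ∈ V, ∀ᶠ k in atTop, y k ≠ v) : False := by
  let W : ℕ → Opens X := fun m => ⟨(V : Set X) \ y '' Ici m, hopen m⟩
  have hmono : Monotone W := fun a b hab =>
    sdiff_subset_sdiff_right (image_mono (Ici_subset_Ici.2 hab))
  have hsup : sSup (range W) ∈ P := by
    refine hP.1 hV fun v hv => ?_
    obtain ⟨m, hm⟩ := eventually_atTop.1 (hleave v hv)
    refine Opens.mem_sSup.2 ⟨W m, mem_range_self m, hv, ?_⟩
    rintro ⟨k, hk, hkv⟩
    exact hm k hk hkv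
  obtain ⟨_, ⟨m, rfl⟩, hm⟩ := hP.2 (range W) (range_nonempty W) (countable_range W)
    (directedOn_range.2 hmono.directed_le) hsup
  obtain ⟨k, hk, hkm⟩ := ((hy _ hm).and (eventually_ge_atTop m)).exists
  exact hk.2 ⟨k, hkm, rfl⟩

/-- A value `v` taken infinitely often by `y` is the limit of a constant subsequence. -/
lemma eventually_ne_or_subseq_limit {X : Type*} [TopologicalSpace X] (y : ℕ → X) (v : X) :
    (∀ᶠ k in atTop, y k ≠ v) ∨
      ∃ σ : ℕ → ℕ, StrictMono σ ∧ Tendsto (y ∘ σ) atTop (nhds v) := by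
  by_cases h : ∀ᶠ k in atTop, y k ≠ v
  · exact Or.inl h
  · obtain ⟨σ, hσ, hv⟩ := extraction_of_frequently_atTop (not_eventually.1 h)
    refine Or.inr ⟨σ, hσ, ?_⟩
    have : y ∘ σ = fun _ => v := funext fun i => not_not.1 (hv i)
    rw [this]
    exact tendsto_const_nhds

/-- In a sequentially Hausdorff sequential space `X`: if nonempty ω-Scott open
collections `Hₙ → H∞` in the ω-Scott topology on `O(O(X))` and `U` is open with `⋂ H∞ ⊆ U`,
then eventually `⋂ Hₙ ⊆ U` (the intersection map is sequentially continuous into the upper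
Vietoris topology). -/
theorem statement15 {X : Type*} [TopologicalSpace X] [SequentialSpace X]
    (hX : SeqHausdorff X) (H : ℕ → OO X) (Hinf : OO X)
    (hne : ∀ n : ℕ, (H n).1.Nonempty) (hneinf : Hinf.1.Nonempty)
    (hH : Tendsto H atTop (@nhds (OO X) (omegaScottTopology (OO X)) Hinf))
    (U : Set X) (hU : IsOpen U) (hsub : (⋂ V ∈ Hinf.1, (V : Set X)) ⊆ U) :
    ∃ n₀ : ℕ, ∀ n ≥ n₀, (⋂ V ∈ (H n).1, (V : Set X)) ⊆ U := by
  have := hX.t1Space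
  rw [← eventually_atTop]
  by_contra hcon
  obtain ⟨φ, hφ, hnot⟩ := extraction_of_frequently_atTop (not_eventually.1 hcon)
  simp only [not_subset] at hnot
  choose y hyH hyU using hnot
  have hy : ∀ V ∈ Hinf.1, ∀ᶠ k in atTop, y k ∈ V := fun V hV =>
    (hφ.tendsto_atTop.eventually (eventually_mem_of_tendsto_OO hH hV)).mono
      fun k hk => mem_iInter₂.1 (hyH k) V hk
  have htop : (⊤ : Opens X) ∈ Hinf.1 := by
    obtain ⟨V, hV⟩ := hneinf
    exact Hinf.2.1 hV le_top
  obtain ⟨p, σ, hσ, hp⟩ : ∃ p, ∃ σ : ℕ → ℕ, StrictMono σ ∧ Tendsto (y ∘ σ) atTop (nhds p) := by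
    by_contra hno
    refine false_of_removable_tails Hinf.2 y hy htop (fun m => ?_) fun v _ =>
      (eventually_ne_or_subseq_limit y v).resolve_right fun h => hno ⟨v, h⟩
    refine isOpen_univ.sdiff (IsSeqClosed.isClosed fun z q hz hq => ?_)
    exact (mem_tail_or_subseq_limit y z m hz hq).resolve_right fun h => hno ⟨q, h⟩
  have hpU : p ∉ U := hU.isClosed_compl.mem_of_tendsto hp (Eventually.of_forall fun i => hyU (σ i))
  -- By uniqueness of limits, `p` is the only subsequential limit of `y ∘ σ`.
  have huniq : ∀ q, (∃ τ : ℕ → ℕ, StrictMono τ ∧ Tendsto ((y ∘ σ) ∘ τ) atTop (nhds q)) → q = p := by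
    rintro q ⟨τ, hτ, hq⟩
    exact hX _ _ _ hq (hp.comp hτ.tendsto_atTop)
  refine hpU (hsub (mem_iInter₂.2 fun V hV => ?_))
  by_contra hpV
  refine false_of_removable_tails Hinf.2 (y ∘ σ)
    (fun W hW => hσ.tendsto_atTop.eventually (hy W hW)) hV (fun m => ?_) fun v hv =>
    (eventually_ne_or_subseq_limit (y ∘ σ) v).resolve_right fun h => hpV (huniq v h ▸ hv)
  have hcl : IsClosed (insert p ((y ∘ σ) '' Ici m)) := by
    refine IsSeqClosed.isClosed fun z q hz hq => ?_
    -- If `z` is frequently equal to `p`, then `q = p`; otherwise `z` is eventually in the tail.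
    by_cases hf : ∃ᶠ i in atTop, z i ∈ ({p} : Set X)
    · exact Or.inl (isClosed_singleton.mem_of_frequently_of_tendsto hf hq)
    · obtain ⟨N, hN⟩ := eventually_atTop.1 (not_frequently.1 hf)
      rcases mem_tail_or_subseq_limit (y ∘ σ) (fun i => z (i + N)) m
        (fun i => (hz (i + N)).resolve_left (hN _ (by omega)))
        (hq.comp (tendsto_add_atTop_nat N)) with h | h
      · exact Or.inr h
      · exact Or.inl (huniq q h)
  have heq : (V : Set X) \ (y ∘ σ) '' Ici m = (V : Set X) \ insert p ((y ∘ σ) '' Ici m) := by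
    rw [← union_singleton, ← sdiff_sdiff, sdiff_singleton_eq_self fun h => hpV h.1]
  rw [heq]
  exact V.isOpen.sdiff hcl
end

section
/- Let X be a sequential topological space that is sequentially Hausdorff. Then for every countably compact set K ⊆ X one has ⋂ e(K) = K, where e(K) = {U ∈ O(X) | K ⊆ U}. (This is the retraction identity of the Hofmann–Mislove-type theorem: the intersection map is a retraction with section e.) -/
open TopologicalSpace Filter Set

/-- In a sequentially Hausdorff sequential space, `⋂ e(K) = K` for every
countably compact set `K` (the retraction identity). -/
theorem statement16 {X : Type*} [TopologicalSpace X] [SequentialSpace X]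
    (hX : SeqHausdorff X) (K : Set X) (hK : CountablyCompactSet K) :
    (⋂ U ∈ eOpens K, (U : Set X)) = K := by
  -- The intersection is the saturation of `K`, which is `K` as soon as points are closed; a
  -- constant sequence at `x` converges to `x`, so unique limits make `{x}` sequentially closed.
  have hclosed : ∀ x : X, IsClosed ({x} : Set X) := fun x => by
    apply IsSeqClosed.isClosed
    intro u p hu hp
    have hu' : u = fun _ => x := funext hu
    subst hu'
    exact hX _ p x hp tendsto_const_nhds
  apply Subset.antisymm
  · intro x hx
    by_contra hxK
    -- `{x}ᶜ` is an open set containing `K` and missing `x`.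
    have hmem : (⟨{x}ᶜ, (hclosed x).isOpen_compl⟩ : Opens X) ∈ eOpens K :=
      fun y hy hyx => hxK (hyx ▸ hy)
    exact mem_iInter₂.1 hx _ hmem rfl
  · exact subset_iInter₂ fun U hU => hU
end
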